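/- Let n = p + q ≥ 2. Let h^μ : ℝⁿ → Mat(N, ℂ) (μ = 1,…,n) be twice continuously differentiable and satisfy the Clifford relations at every point, and let C_μ : ℝⁿ → Mat(N, ℂ) be continuously differentiable with tr C_μ(x) = 0 for all μ, x, satisfying the primitive field equation ∂_μ h^ν − [C_μ, h^ν] = 0 for all μ, ν. Assume that for every x ∈ ℝⁿ the only matrices commuting with h^ν(x) for all ν are the scalar multiples of the identity. Let σ ∈ ℂ and define B_μ = σ h_μ + C_μ (with h_μ = η_{μμ} h^μ) and G_{μν} = ∂_μ B_ν − ∂_ν B_μ − [B_μ, B_ν]. Then: (i) G_{μν} = −σ² [h_μ, h_ν] for all μ, ν; and (ii) with G^{μν} = η^{μμ} η^{νν} G_{μν}, for every ν = 1,…,n one has Σ_{μ=1}^n ( ∂_μ G^{μν} − [B_μ, G^{μν}] ) = 4(n − 1) σ³ h^ν. That is, B_μ solves the Yang–Mills equations with non-Abelian current ε h^ν, where ε = 4(n − 1) σ³. -/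

import Mathlib

open Matrix

attribute [local instance] Matrix.normedAddCommGroup Matrix.normedSpace

/-- The diagonal metric entries η^{μμ} of signature (p,q). -/
def etaC (p q : ℕ) (μ : Fin (p + q)) : ℂ := if (μ : ℕ) < p then 1 else -1

/-- The Clifford relations h^μ h^ν + h^ν h^μ = 2 η^{μν} I for signature (p,q). -/
def CliffRel (p q N : ℕ) (h : Fin (p + q) → Matrix (Fin N) (Fin N) ℂ) : Prop :=
  ∀ μ ν : Fin (p + q), h μ * h ν + h ν * h μ =
    (2 * if μ = ν then etaC p q μ else 0) • (1 : Matrix (Fin N) (Fin N) ℂ)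

/-- The partial derivative ∂_μ of a matrix-valued function on ℝⁿ. -/
noncomputable def pder {n N : ℕ} (μ : Fin n)
    (f : (Fin n → ℝ) → Matrix (Fin N) (Fin N) ℂ) (x : Fin n → ℝ) :
    Matrix (Fin N) (Fin N) ℂ :=
  fderiv ℝ f x (Pi.single μ 1)

/-- The Yang–Mills potential B_μ = σ h_μ + C_μ, with h_μ = η_{μμ} h^μ. -/
noncomputable def Bpot (p q N : ℕ) (σ : ℂ)
    (h C : Fin (p + q) → (Fin (p + q) → ℝ) → Matrix (Fin N) (Fin N) ℂ)
    (μ : Fin (p + q)) (y : Fin (p + q) → ℝ) : Matrix (Fin N) (Fin N) ℂ :=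
  σ • (etaC p q μ • h μ y) + C μ y

/-- The field strength G_{μν} = ∂_μ B_ν − ∂_ν B_μ − [B_μ, B_ν]. -/
noncomputable def Gfield (p q N : ℕ) (σ : ℂ)
    (h C : Fin (p + q) → (Fin (p + q) → ℝ) → Matrix (Fin N) (Fin N) ℂ)
    (μ ν : Fin (p + q)) (x : Fin (p + q) → ℝ) : Matrix (Fin N) (Fin N) ℂ :=
  pder μ (Bpot p q N σ h C ν) x - pder ν (Bpot p q N σ h C μ) x -
    (Bpot p q N σ h C μ x * Bpot p q N σ h C ν x -
      Bpot p q N σ h C ν x * Bpot p q N σ h C μ x)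

/-- The raised field strength G^{μν} = η^{μμ} η^{νν} G_{μν}. -/
noncomputable def GfieldUp (p q N : ℕ) (σ : ℂ)
    (h C : Fin (p + q) → (Fin (p + q) → ℝ) → Matrix (Fin N) (Fin N) ℂ)
    (μ ν : Fin (p + q)) (x : Fin (p + q) → ℝ) : Matrix (Fin N) (Fin N) ℂ :=
  (etaC p q μ * etaC p q ν) • Gfield p q N σ h C μ ν x


section helpers

variable {n N : ℕ}

theorem pder_of (μ : Fin n) {f : (Fin n → ℝ) → Matrix (Fin N) (Fin N) ℂ} {x : Fin n → ℝ}
    {L : (Fin n → ℝ) →L[ℝ] Matrix (Fin N) (Fin N) ℂ} (H : HasFDerivAt f L x) :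
    pder μ f x = L (Pi.single μ 1) :=
  DFunLike.congr_fun H.fderiv _

/-- Product rule for the partial derivative. -/
theorem pder_mul (μ : Fin n) (f g : (Fin n → ℝ) → Matrix (Fin N) (Fin N) ℂ) (x : Fin n → ℝ)
    (hf : DifferentiableAt ℝ f x) (hg : DifferentiableAt ℝ g x) :
    DifferentiableAt ℝ (fun y => f y * g y) x ∧
    pder μ (fun y => f y * g y) x = pder μ f x * g x + f x * pder μ g x := by
  let b : Matrix (Fin N) (Fin N) ℂ →L[ℝ] Matrix (Fin N) (Fin N) ℂ →L[ℝ] Matrix (Fin N) (Fin N) ℂ :=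
    LinearMap.toContinuousLinearMap
      ((LinearMap.toContinuousLinearMap (𝕜 := ℝ) (E := Matrix (Fin N) (Fin N) ℂ)
        (F' := Matrix (Fin N) (Fin N) ℂ)).toLinearMap ∘ₗ
        (LinearMap.mul ℝ (Matrix (Fin N) (Fin N) ℂ)))
  have H := b.hasFDerivAt_of_bilinear hf.hasFDerivAt hg.hasFDerivAt
  refine ⟨H.differentiableAt, ?_⟩
  rw [add_comm]
  exact pder_of μ H

theorem pder_sub (μ : Fin n) (f g : (Fin n → ℝ) → Matrix (Fin N) (Fin N) ℂ) (x : Fin n → ℝ)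
    (hf : DifferentiableAt ℝ f x) (hg : DifferentiableAt ℝ g x) :
    pder μ (fun y => f y - g y) x = pder μ f x - pder μ g x := by
  exact pder_of μ (hf.hasFDerivAt.sub hg.hasFDerivAt)

theorem pder_add (μ : Fin n) (f g : (Fin n → ℝ) → Matrix (Fin N) (Fin N) ℂ) (x : Fin n → ℝ)
    (hf : DifferentiableAt ℝ f x) (hg : DifferentiableAt ℝ g x) :
    pder μ (fun y => f y + g y) x = pder μ f x + pder μ g x := by
  exact pder_of μ (hf.hasFDerivAt.add hg.hasFDerivAt)

theorem pder_smul (μ : Fin n) (c : ℂ) (f : (Fin n → ℝ) → Matrix (Fin N) (Fin N) ℂ)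
    (x : Fin n → ℝ) (hf : DifferentiableAt ℝ f x) :
    DifferentiableAt ℝ (fun y => c • f y) x ∧
    pder μ (fun y => c • f y) x = c • pder μ f x := by
  have H := hf.hasFDerivAt.const_smul c
  refine ⟨H.differentiableAt, ?_⟩
  exact pder_of μ H

theorem pder_trace (μ : Fin n) (f : (Fin n → ℝ) → Matrix (Fin N) (Fin N) ℂ)
    (x : Fin n → ℝ) (hf : DifferentiableAt ℝ f x) (h0 : ∀ y, (f y).trace = 0) :
    (pder μ f x).trace = 0 := by
  let L : Matrix (Fin N) (Fin N) ℂ →L[ℝ] ℂ :=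
    LinearMap.toContinuousLinearMap (Matrix.traceLinearMap (Fin N) ℝ ℂ)
  have H := L.hasFDerivAt.comp x hf.hasFDerivAt
  have e : (L ∘ f) = fun _ => (0 : ℂ) := funext h0
  rw [e] at H
  have := H.unique (hasFDerivAt_const (0 : ℂ) x)
  exact DFunLike.congr_fun this (Pi.single μ 1)

theorem pder_symm (μ ν : Fin n) (f : (Fin n → ℝ) → Matrix (Fin N) (Fin N) ℂ)
    (x : Fin n → ℝ) (hf : ContDiff ℝ 2 f) :
    pder μ (pder ν f) x = pder ν (pder μ f) x := by
  have hs : IsSymmSndFDerivAt ℝ f x :=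
    hf.contDiffAt.isSymmSndFDerivAt (by simp)
  have hd : DifferentiableAt ℝ (fderiv ℝ f) x :=
    ((hf.fderiv_right (m := 1) (by norm_num)).differentiable (by norm_num)) x
  have key : ∀ a b : Fin n, pder a (pder b f) x =
      fderiv ℝ (fderiv ℝ f) x (Pi.single a 1) (Pi.single b 1) := by
    intro a b
    have := hd.hasFDerivAt.clm_apply (hasFDerivAt_const (Pi.single b (1 : ℝ) : Fin n → ℝ) x)
    refine (pder_of a this).trans ?_
    exact (congrArg (fun z => z + fderiv ℝ (fderiv ℝ f) x (Pi.single a 1) (Pi.single b 1))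
      (map_zero (fderiv ℝ f x))).trans (zero_add _)
  rw [key, key]
  exact hs _ _

end helpers

theorem etaC_sq (p q : ℕ) (μ : Fin (p + q)) : etaC p q μ * etaC p q μ = 1 := by
  unfold etaC; split_ifs <;> norm_num

theorem curv_zero
    (p q N : ℕ) (hN : 1 ≤ N)
    (h C : Fin (p + q) → (Fin (p + q) → ℝ) → Matrix (Fin N) (Fin N) ℂ)
    (hh : ∀ μ, ContDiff ℝ 2 (h μ))
    (hC : ∀ μ, ContDiff ℝ 1 (C μ))
    (hCtr : ∀ μ x, (C μ x).trace = 0)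
    (hprim : ∀ μ ν x, pder μ (h ν) x = C μ x * h ν x - h ν x * C μ x)
    (hcomm : ∀ x (A : Matrix (Fin N) (Fin N) ℂ),
      (∀ ν, A * h ν x = h ν x * A) → ∃ c : ℂ, A = c • (1 : Matrix (Fin N) (Fin N) ℂ))
    (μ ν : Fin (p + q)) (x : Fin (p + q) → ℝ) :
    pder μ (C ν) x - pder ν (C μ) x = C μ x * C ν x - C ν x * C μ x := by
  have dh : ∀ a, DifferentiableAt ℝ (h a) x := fun a => (hh a).differentiable (by norm_num) x
  have dC : ∀ a, DifferentiableAt ℝ (C a) x := fun a => (hC a).differentiable (by norm_num) x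
  have second : ∀ a b l, pder a (pder b (h l)) x =
      (pder a (C b) x * h l x + C b x * (C a x * h l x - h l x * C a x)) -
      ((C a x * h l x - h l x * C a x) * C b x + h l x * pder a (C b) x) := by
    intro a b l
    have e : pder b (h l) = fun y => C b y * h l y - h l y * C b y := funext (hprim b l)
    rw [e, pder_sub _ _ _ _ (pder_mul a _ _ _ (dC b) (dh l)).1 (pder_mul a _ _ _ (dh l) (dC b)).1,
      (pder_mul a _ _ _ (dC b) (dh l)).2, (pder_mul a _ _ _ (dh l) (dC b)).2, hprim]
  obtain ⟨c, hc⟩ := hcomm x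
    (pder μ (C ν) x - pder ν (C μ) x - (C μ x * C ν x - C ν x * C μ x)) (by
      intro l
      have s := pder_symm μ ν (h l) x (hh l)
      rw [second, second, ← sub_eq_zero] at s
      rw [← sub_eq_zero, ← s]
      noncomm_ring)
  have ht := congrArg Matrix.trace hc
  simp only [Matrix.trace_sub, pder_trace _ _ _ (dC _) (hCtr _),
    Matrix.trace_mul_comm (C ν x) (C μ x), Matrix.trace_smul, Matrix.trace_one] at ht
  have hN' : (N : ℂ) ≠ 0 := by exact_mod_cast (by omega : N ≠ 0)
  have hc0 : c = 0 := by
    simpa [hN', show N ≠ 0 by omega] using ht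
  rw [hc0, zero_smul, sub_eq_zero] at hc
  exact hc

/-- with B_μ = σ h_μ + C_μ, where C_μ is a traceless solution of
the primitive field equation, one has (i) G_{μν} = −σ²[h_μ, h_ν] and
(ii) Σ_μ (∂_μ G^{μν} − [B_μ, G^{μν}]) = 4(n−1)σ³ h^ν, i.e. B_μ solves the
Yang–Mills equations with current ε h^ν, ε = 4(n−1)σ³. -/
theorem yang_mills_solution_from_primitive_equation
    (p q N : ℕ) (hn : 2 ≤ p + q) (hN : 1 ≤ N)
    (h C : Fin (p + q) → (Fin (p + q) → ℝ) → Matrix (Fin N) (Fin N) ℂ)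
    (hh : ∀ μ, ContDiff ℝ 2 (h μ))
    (hC : ∀ μ, ContDiff ℝ 1 (C μ))
    (hCtr : ∀ μ x, (C μ x).trace = 0)
    (hcl : ∀ x, CliffRel p q N (fun μ => h μ x))
    (hprim : ∀ μ ν x, pder μ (h ν) x - (C μ x * h ν x - h ν x * C μ x) = 0)
    (hcomm : ∀ x (A : Matrix (Fin N) (Fin N) ℂ),
      (∀ ν, A * h ν x = h ν x * A) → ∃ c : ℂ, A = c • (1 : Matrix (Fin N) (Fin N) ℂ))
    (σ : ℂ) :
    (∀ μ ν x,
      Gfield p q N σ h C μ ν x =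
        (-(σ ^ 2)) • ((etaC p q μ • h μ x) * (etaC p q ν • h ν x) -
          (etaC p q ν • h ν x) * (etaC p q μ • h μ x)))
    ∧
    (∀ ν x,
      ∑ μ : Fin (p + q),
        (pder μ (fun y => GfieldUp p q N σ h C μ ν y) x -
          (Bpot p q N σ h C μ x * GfieldUp p q N σ h C μ ν x -
            GfieldUp p q N σ h C μ ν x * Bpot p q N σ h C μ x)) =
      (4 * (((p + q : ℕ) : ℂ) - 1) * σ ^ 3) • h ν x) := by
  have hprim' : ∀ μ ν x, pder μ (h ν) x = C μ x * h ν x - h ν x * C μ x :=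
    fun μ ν x => sub_eq_zero.1 (hprim μ ν x)
  have dh : ∀ a x, DifferentiableAt ℝ (h a) x := fun a x => (hh a).differentiable (by norm_num) x
  have dC : ∀ a x, DifferentiableAt ℝ (C a) x := fun a x => (hC a).differentiable (by norm_num) x
  have part1 : ∀ μ ν x,
      Gfield p q N σ h C μ ν x =
        (-(σ ^ 2)) • ((etaC p q μ • h μ x) * (etaC p q ν • h ν x) -
          (etaC p q ν • h ν x) * (etaC p q μ • h μ x)) := by
    intro μ ν x
    have hF := curv_zero p q N hN h C hh hC hCtr hprim' hcomm μ ν x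
    have hB : ∀ a b, pder a (Bpot p q N σ h C b) x =
        σ • (etaC p q b • (C a x * h b x - h b x * C a x)) + pder a (C b) x := by
      intro a b
      have d1 := pder_smul a (etaC p q b) (h b) x (dh b x)
      have d2 := pder_smul a σ _ x d1.1
      have d3 := pder_add a _ _ x d2.1 (dC b x)
      rw [d2.2, d1.2, hprim'] at d3
      exact d3
    unfold Gfield
    rw [hB, hB, eq_add_of_sub_eq hF]
    unfold Bpot
    simp only [mul_add, add_mul, smul_mul_assoc, mul_smul_comm, smul_sub, smul_smul]
    module
  refine ⟨part1, ?_⟩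
  intro ν x
  have hG : ∀ μ, (fun y => GfieldUp p q N σ h C μ ν y) =
      fun y => (-(σ ^ 2)) • (h μ y * h ν y - h ν y * h μ y) := by
    intro μ
    funext y
    unfold GfieldUp
    rw [part1]
    simp only [smul_mul_assoc, mul_smul_comm, smul_sub, smul_smul]
    have e1 : etaC p q μ * etaC p q ν * (-(σ ^ 2) * (etaC p q μ * etaC p q ν)) = -(σ^2) := by
      linear_combination (-(σ^2)) * (etaC p q μ * etaC p q μ) * etaC_sq p q ν
        + (-(σ^2)) * etaC_sq p q μ
    have e2 : etaC p q μ * etaC p q ν * (-(σ ^ 2) * (etaC p q ν * etaC p q μ)) = -(σ^2) := by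
      linear_combination e1
    simp only [e1, e2]
  have term : ∀ μ, (pder μ (fun y => GfieldUp p q N σ h C μ ν y) x -
          (Bpot p q N σ h C μ x * GfieldUp p q N σ h C μ ν x -
            GfieldUp p q N σ h C μ ν x * Bpot p q N σ h C μ x)) =
      (4 * (1 - if μ = ν then 1 else 0) * σ ^ 3) • h ν x := by
    intro μ
    have hGx := congrFun (hG μ) x
    rw [hGx, hG]
    have m1 := pder_mul μ _ _ x (dh μ x) (dh ν x)
    have m2 := pder_mul μ _ _ x (dh ν x) (dh μ x)
    have m3 := pder_sub μ _ _ x m1.1 m2.1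
    rw [(pder_smul μ (-(σ^2)) (fun y => h μ y * h ν y - h ν y * h μ y) x (m1.1.sub m2.1)).2, m3, m1.2, m2.2, hprim', hprim']
    unfold Bpot
    have step : (-(σ ^ 2)) • ((C μ x * h μ x - h μ x * C μ x) * h ν x +
          h μ x * (C μ x * h ν x - h ν x * C μ x) -
          ((C μ x * h ν x - h ν x * C μ x) * h μ x +
          h ν x * (C μ x * h μ x - h μ x * C μ x))) -
        ((σ • etaC p q μ • h μ x + C μ x) * (-(σ ^ 2)) • (h μ x * h ν x - h ν x * h μ x) -
          (-(σ ^ 2)) • (h μ x * h ν x - h ν x * h μ x) * (σ • etaC p q μ • h μ x + C μ x)) =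
        (σ ^ 3 * etaC p q μ) • (h μ x * (h μ x * h ν x - h ν x * h μ x) -
          (h μ x * h ν x - h ν x * h μ x) * h μ x) := by
      simp only [mul_add, add_mul, mul_sub, sub_mul, smul_mul_assoc, mul_smul_comm, smul_sub,
        smul_add, smul_smul, mul_assoc]
      module
    rw [step]
    by_cases hμ : μ = ν
    · subst hμ
      simp
    · have c1 := hcl x μ ν
      have c2 := hcl x μ μ
      simp only [hμ, if_false, mul_zero, zero_smul] at c1
      simp only [if_true] at c2
      have sq : h μ x * h μ x = etaC p q μ • (1 : Matrix (Fin N) (Fin N) ℂ) := by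
        rw [← two_smul ℂ, mul_smul] at c2
        exact smul_right_injective _ (two_ne_zero' ℂ) c2
      have an : h ν x * h μ x = - (h μ x * h ν x) := by
        rw [add_comm] at c1; exact eq_neg_of_add_eq_zero_left c1
      have tr : h μ x * (h μ x * h ν x - h ν x * h μ x) -
          (h μ x * h ν x - h ν x * h μ x) * h μ x = (4 * etaC p q μ) • h ν x := by
        have q1 : h μ x * (h μ x * h ν x) = etaC p q μ • h ν x := by
          rw [← mul_assoc, sq, smul_mul_assoc, one_mul]
        rw [an]
        have q2 : h μ x * h ν x * h μ x = - (etaC p q μ • h ν x) := by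
          rw [mul_assoc, an, mul_neg, q1]
        rw [mul_sub, sub_mul, mul_neg, neg_mul, q1, q2]
        module
      rw [tr, smul_smul]
      simp only [hμ, if_false]
      congr 1
      linear_combination (4 * σ^3) * etaC_sq p q μ
  rw [Finset.sum_congr rfl (fun μ _ => term μ), ← Finset.sum_smul, ← Finset.sum_mul,
    ← Finset.mul_sum, Finset.sum_sub_distrib]
  simp
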